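/- Let (X,Y) be a binary source pair, N = 4, and U⁴ = X⁴ G₄ with G₄ the 4×4 polar transform over GF(2). Then H(U₁ | Y⁴) ≥ H(U₂ | Y⁴, U₁) and H(U₃ | Y⁴, U¹, U₂) ≥ H(U₄ | Y⁴, U₁, U₂, U₃). -/

import Mathlib

open Matrix

/-- The 4×4 polar transform `G₄ = [[1,0],[1,1]]^{⊗2} B₄` over GF(2)
(it satisfies `G₄⁻¹ = G₄`). -/
def G4 : Matrix (Fin 4) (Fin 4) (ZMod 2) :=
  !![1, 0, 0, 0; 1, 0, 1, 0; 1, 1, 0, 0; 1, 1, 1, 1]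

/-- Conditional Shannon entropy (base 2) of a joint pmf `q x y`. -/
noncomputable def condEnt {α β : Type*} [Fintype α] (q : α → β → ℝ) : ℝ :=
  ∑' y : β, ∑ x : α, -(q x y * Real.logb 2 (q x y / ∑ x' : α, q x' y))

/-- Joint pmf of `(U⁴, Y⁴)` where `(X_i,Y_i)` are i.i.d. copies of the source
`p` and `U⁴ = X⁴ G₄` (equivalently `X⁴ = U⁴ G₄`). -/
noncomputable def pU4 (p : ZMod 2 → ℕ → ℝ) (u : Fin 4 → ZMod 2)
    (y : Fin 4 → ℕ) : ℝ :=
  ∏ i : Fin 4, p (Matrix.vecMul u G4 i) (y i)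

open Real

/-- Mixing `x`, `y` by a doubly stochastic `2 × 2` matrix, scaled to row sums `s + t`, does not
decrease the unnormalized entropy. -/
lemma negMulLog_mix_le {x y s t : ℝ} (hx : 0 ≤ x) (hy : 0 ≤ y) (hs : 0 ≤ s) (ht : 0 ≤ t) :
    (x + y) * negMulLog (s + t) + (s + t) * (negMulLog x + negMulLog y) ≤
      negMulLog (x * s + y * t) + negMulLog (y * s + x * t) := by
  rcases (add_nonneg hs ht).eq_or_lt with h | h
  · obtain rfl : s = 0 := by linarith
    obtain rfl : t = 0 := by linarith
    simp
  set m := s + t with hm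
  have hw : s / m + t / m = 1 := by field_simp; exact hm.symm
  have h1 := concaveOn_negMulLog.2 (Set.mem_Ici.2 hx) (Set.mem_Ici.2 hy)
    (div_nonneg hs h.le) (div_nonneg ht h.le) hw
  have h2 := concaveOn_negMulLog.2 (Set.mem_Ici.2 hy) (Set.mem_Ici.2 hx)
    (div_nonneg hs h.le) (div_nonneg ht h.le) hw
  simp only [smul_eq_mul] at h1 h2
  have e1 : x * s + y * t = m * (s / m * x + t / m * y) := by field_simp
  have e2 : y * s + x * t = m * (s / m * y + t / m * x) := by field_simp
  rw [e1, e2, negMulLog_mul, negMulLog_mul]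
  have h3 := mul_le_mul_of_nonneg_left (add_le_add h1 h2) h.le
  have ew : t / m = 1 - s / m := by linarith
  rw [ew] at h3 ⊢
  linarith

lemma neg_mul_logb_div {q s : ℝ} (hq : 0 ≤ q) (hs : q ≤ s) :
    -(q * logb 2 (q / s)) = (negMulLog q + q * log s) / log 2 := by
  rcases hq.eq_or_lt with rfl | h
  · simp
  · rw [logb, log_div h.ne' (h.trans_le hs).ne', negMulLog]
    ring

lemma neg_mul_logb_div_nonneg {q s : ℝ} (hq : 0 ≤ q) (hs : q ≤ s) :
    0 ≤ -(q * logb 2 (q / s)) := by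
  have : logb 2 (q / s) ≤ 0 :=
    logb_nonpos one_lt_two (div_nonneg hq (hq.trans hs)) (div_le_one_of_le₀ hs (hq.trans hs))
  nlinarith

/-- The unnormalized binary entropy, in bits, is at most the total mass. -/
lemma neg_mul_logb_div_add_le {x y : ℝ} (hx : 0 ≤ x) (hy : 0 ≤ y) :
    -(x * logb 2 (x / (x + y))) + -(y * logb 2 (y / (x + y))) ≤ x + y := by
  rw [neg_mul_logb_div hx (by linarith), neg_mul_logb_div hy (by linarith), ← add_div,
    div_le_iff₀ (log_pos one_lt_two)]
  have h := concaveOn_negMulLog.2 (Set.mem_Ici.2 hx) (Set.mem_Ici.2 hy)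
    (by norm_num : (0 : ℝ) ≤ 1 / 2) (by norm_num : (0 : ℝ) ≤ 1 / 2) (by norm_num)
  have e : (1 / 2 : ℝ) • x + (1 / 2 : ℝ) • y = 2⁻¹ * (x + y) := by
    simp only [smul_eq_mul]; ring
  rw [e, negMulLog_mul] at h
  simp only [smul_eq_mul, negMulLog, log_inv] at h ⊢
  linarith

/-- For independent bits `S`, `T` with unnormalized laws `a`, `b`,
`H(T | S + T) ≤ H(S + T)`. -/
lemma entropy_given_sum_le {a b : ZMod 2 → ℝ} (ha : ∀ x, 0 ≤ a x) (hb : ∀ x, 0 ≤ b x) :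
    ∑ c, ∑ d, -(a (c + d) * b d * logb 2 (a (c + d) * b d / ∑ k, a (c + k) * b k)) ≤
      ∑ c, -((∑ d, a (c + d) * b d) *
        logb 2 ((∑ d, a (c + d) * b d) / ∑ l, ∑ d, a (l + d) * b d)) := by
  have sum_two : ∀ f : ZMod 2 → ℝ, ∑ x, f x = f 0 + f 1 := fun f => Fin.sum_univ_two f
  have h11 : (1 + 1 : ZMod 2) = 0 := rfl
  simp only [sum_two, add_zero, zero_add, h11]
  have n00 := mul_nonneg (ha 0) (hb 0)
  have n11 := mul_nonneg (ha 1) (hb 1)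
  have n10 := mul_nonneg (ha 1) (hb 0)
  have n01 := mul_nonneg (ha 0) (hb 1)
  rw [neg_mul_logb_div n00 (by linarith), neg_mul_logb_div n11 (by linarith),
    neg_mul_logb_div n10 (by linarith), neg_mul_logb_div n01 (by linarith),
    neg_mul_logb_div (add_nonneg n00 n11) (by linarith),
    neg_mul_logb_div (add_nonneg n10 n01) (by linarith)]
  simp only [← add_div]
  refine div_le_div_of_nonneg_right ?_ (log_pos one_lt_two).le
  have hA := negMulLog_mix_le (ha 0) (ha 1) (hb 0) (hb 1)
  have hB := negMulLog_mix_le (hb 0) (hb 1) (ha 0) (ha 1)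
  have hAB := negMulLog_mul (a 0 + a 1) (b 0 + b 1)
  have e : a 0 * b 0 + a 1 * b 1 + (a 1 * b 0 + a 0 * b 1) = (a 0 + a 1) * (b 0 + b 1) := by ring
  have e1 : b 0 * a 0 + b 1 * a 1 = a 0 * b 0 + a 1 * b 1 := by ring
  have e2 : b 1 * a 0 + b 0 * a 1 = a 1 * b 0 + a 0 * b 1 := by ring
  rw [e1, e2] at hB
  rw [e]
  simp only [negMulLog_mul]
  have neg_eq : ∀ x : ℝ, negMulLog x = -x * log x := fun x => rfl
  have hP := neg_eq (a 0 * b 0 + a 1 * b 1)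
  have hQ := neg_eq (a 1 * b 0 + a 0 * b 1)
  have hT := neg_eq ((a 0 + a 1) * (b 0 + b 1))
  linarith

/-- Conditional form of `H(T | S + T) ≤ H(S + T)`, for bits `S`, `T` that are independent given
the side information. -/
lemma condEnt_given_sum_le {β γ : Type*} (e : β × ZMod 2 ≃ γ) {a b : ZMod 2 → β → ℝ}
    (ha : ∀ x y, 0 ≤ a x y) (hb : ∀ x y, 0 ≤ b x y)
    (hs : Summable fun y => ∑ c, ∑ d, a (c + d) y * b d y)
    {q : ZMod 2 → β → ℝ} {r : ZMod 2 → γ → ℝ}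
    (hq : ∀ c y, q c y = ∑ d, a (c + d) y * b d y)
    (hr : ∀ d y c, r d (e (y, c)) = a (c + d) y * b d y) :
    condEnt r ≤ condEnt q := by
  have nn : ∀ c d y, 0 ≤ a (c + d) y * b d y := fun c d y => mul_nonneg (ha _ _) (hb _ _)
  have nq : ∀ c y, 0 ≤ ∑ d, a (c + d) y * b d y := fun c y => Finset.sum_nonneg fun d _ => nn c d y
  unfold condEnt
  rw [← e.tsum_eq]
  simp only [hq, hr]
  have hle := fun y => entropy_given_sum_le (fun x => ha x y) (fun x => hb x y)
  have hL : Summable fun y => ∑ c, -((∑ d, a (c + d) y * b d y) *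
      logb 2 ((∑ d, a (c + d) y * b d y) / ∑ l, ∑ d, a (l + d) y * b d y)) := by
    refine Summable.of_nonneg_of_le (fun y => Finset.sum_nonneg fun c _ =>
      neg_mul_logb_div_nonneg (nq c y)
        (Finset.single_le_sum (fun c _ => nq c y) (Finset.mem_univ c))) (fun y => ?_) hs
    have sum_two : ∀ f : ZMod 2 → ℝ, ∑ x, f x = f 0 + f 1 := fun f => Fin.sum_univ_two f
    have := neg_mul_logb_div_add_le (nq 0 y) (nq 1 y)
    rwa [sum_two, sum_two (fun c => ∑ d, a (c + d) y * b d y)]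
  have n2 : ∀ w : β × ZMod 2, 0 ≤ ∑ d, -(a (w.2 + d) w.1 * b d w.1 *
      logb 2 (a (w.2 + d) w.1 * b d w.1 / ∑ k, a (w.2 + k) w.1 * b k w.1)) := fun w =>
    Finset.sum_nonneg fun d _ => neg_mul_logb_div_nonneg (nn _ _ _)
      (Finset.single_le_sum (fun d _ => nn w.2 d w.1) (Finset.mem_univ d))
  have hR := Summable.of_nonneg_of_le
    (fun y => Finset.sum_nonneg fun c _ => n2 (y, c)) hle hL
  have hR2 := (summable_prod_of_nonneg n2).2
    ⟨fun y => Summable.of_finite, by simpa only [tsum_fintype] using hR⟩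
  calc _ = ∑' y, ∑ c, ∑ d, -(a (c + d) y * b d y *
          logb 2 (a (c + d) y * b d y / ∑ k, a (c + k) y * b k y)) := by
        rw [hR2.tsum_prod]; simp only [tsum_fintype]
    _ ≤ _ := hR.tsum_le_tsum hle hL

/-- A product of copies of a nonnegative summable function is summable. -/
lemma summable_pi_prod {ι κ : Type*} [Fintype ι] {f : κ → ℝ} (hf : ∀ y, 0 ≤ f y)
    (hs : Summable f) : Summable fun y : ι → κ => ∏ i, f (y i) := by
  classical
  refine summable_of_sum_le (fun y => Finset.prod_nonneg fun i _ => hf _)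
    (c := ∏ _i : ι, ∑' k, f k) fun s => ?_
  calc ∑ y ∈ s, ∏ i, f (y i)
      ≤ ∑ y ∈ Fintype.piFinset fun i => s.image fun y => y i, ∏ i, f (y i) :=
        Finset.sum_le_sum_of_subset_of_nonneg
          (fun y hy => Fintype.mem_piFinset.2 fun i => Finset.mem_image_of_mem _ hy)
          fun y _ _ => Finset.prod_nonneg fun i _ => hf _
    _ = ∏ i, ∑ k ∈ s.image (fun y => y i), f k := (Finset.prod_univ_sum _ _).symm
    _ ≤ _ := Finset.prod_le_prod (fun i _ => Finset.sum_nonneg fun k _ => hf k)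
        fun i _ => hs.sum_le_tsum _ fun k _ => hf k

lemma sum_fin_four {α M : Type*} [Fintype α] [AddCommMonoid M] (F : (Fin 4 → α) → M) :
    ∑ u, F u = ∑ a, ∑ b, ∑ c, ∑ d, F ![a, b, c, d] := by
  simp only [← Fintype.sum_prod_type']
  refine (Fintype.sum_bijective (fun x : α × α × α × α => ![x.1, x.2.1, x.2.2.1, x.2.2.2])
    ⟨fun x y h => ?_, fun u => ⟨(u 0, u 1, u 2, u 3), ?_⟩⟩ _ _ fun x => ?_).symm
  · have h0 := congrFun h 0
    have h1 := congrFun h 1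
    have h2 := congrFun h 2
    have h3 := congrFun h 3
    ext <;> simpa
  · ext i; fin_cases i <;> rfl
  · rfl

lemma pU4_apply (p : ZMod 2 → ℕ → ℝ) (a b c d : ZMod 2) (y : Fin 4 → ℕ) :
    pU4 p ![a, b, c, d] y =
      (p (a + b + (c + d)) (y 0) * p (c + d) (y 1)) * (p (b + d) (y 2) * p d (y 3)) := by
  simp [pU4, G4, Fin.prod_univ_four, Matrix.vecMul, dotProduct, Fin.sum_univ_four]
  ring_nf

/-- The joint law of `(U₁, U₂, Y⁴)` factors through the two half-size transforms. -/
lemma sum_pU4 (p : ZMod 2 → ℕ → ℝ) (a b : ZMod 2) (y : Fin 4 → ℕ) :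
    ∑ c, ∑ d, pU4 p ![a, b, c, d] y =
      (∑ v, p (a + b + v) (y 0) * p v (y 1)) * ∑ v, p (b + v) (y 2) * p v (y 3) := by
  simp only [pU4_apply]
  rw [Finset.sum_comm, Finset.mul_sum]
  refine Finset.sum_congr rfl fun d _ => ?_
  rw [← Finset.sum_mul]
  congr 1
  exact Fintype.sum_equiv (Equiv.addRight d) _ _ fun c => rfl

/-- The law of `Y⁴` is the product of the laws of its coordinates. -/
lemma sum_sum_pU4 (p : ZMod 2 → ℕ → ℝ) (y : Fin 4 → ℕ) :
    ∑ a, ∑ b, ∑ c, ∑ d, pU4 p ![a, b, c, d] y = ∏ i, ∑ x, p x (y i) := by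
  have sum_two : ∀ f : ZMod 2 → ℝ, ∑ x, f x = f 0 + f 1 := fun f => Fin.sum_univ_two f
  have h11 : (1 + 1 : ZMod 2) = 0 := rfl
  simp only [sum_pU4]
  simp only [Fin.prod_univ_four, sum_two, add_zero, zero_add, h11]
  ring

lemma summable_sum_pU4 {p : ZMod 2 → ℕ → ℝ} (hp : ∀ x y, 0 ≤ p x y)
    (hs : Summable fun z : ZMod 2 × ℕ => p z.1 z.2) :
    Summable fun y => ∑ a, ∑ b, ∑ c, ∑ d, pU4 p ![a, b, c, d] y := by
  simp only [sum_sum_pU4]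
  have hx : ∀ x, Summable fun y => p x y := fun x =>
    hs.comp_injective (i := fun y : ℕ => (x, y)) (Prod.mk_right_injective x)
  exact summable_pi_prod (f := fun k => ∑ x, p x k) (fun k => Finset.sum_nonneg fun x _ => hp x k)
    (summable_sum fun x _ => hx x)

/-- `H(U₁ | Y⁴) ≥ H(U₂ | Y⁴, U₁)` and `H(U₃ | Y⁴, U₁, U₂) ≥ H(U₄ | Y⁴, U₁, U₂, U₃)`. -/
theorem stmt17 (p : ZMod 2 → ℕ → ℝ) (hp : ∀ x y, 0 ≤ p x y)
    (hsum : HasSum (fun z : ZMod 2 × ℕ => p z.1 z.2) 1) :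
    (condEnt (fun (a : ZMod 2) (y : Fin 4 → ℕ) =>
        ∑ u : Fin 4 → ZMod 2, if u 0 = a then pU4 p u y else 0) ≥
      condEnt (fun (a : ZMod 2) (w : (Fin 4 → ℕ) × ZMod 2) =>
        ∑ u : Fin 4 → ZMod 2,
          if u 0 = w.2 ∧ u 1 = a then pU4 p u w.1 else 0)) ∧
    (condEnt (fun (a : ZMod 2) (w : (Fin 4 → ℕ) × ZMod 2 × ZMod 2) =>
        ∑ u : Fin 4 → ZMod 2,
          if u 0 = w.2.1 ∧ u 1 = w.2.2 ∧ u 2 = a then pU4 p u w.1 else 0) ≥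
      condEnt (fun (a : ZMod 2) (w : (Fin 4 → ℕ) × ZMod 2 × ZMod 2 × ZMod 2) =>
        ∑ u : Fin 4 → ZMod 2,
          if u 0 = w.2.1 ∧ u 1 = w.2.2.1 ∧ u 2 = w.2.2.2 ∧ u 3 = a
          then pU4 p u w.1 else 0)) := by
  have hS := summable_sum_pU4 hp hsum.summable
  have hU : ∀ u y, 0 ≤ pU4 p u y := fun u y => Finset.prod_nonneg fun i _ => hp _ _
  constructor
  · refine condEnt_given_sum_le (Equiv.refl _)
      (a := fun s y => ∑ v, p (s + v) (y 0) * p v (y 1))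
      (b := fun t y => ∑ v, p (t + v) (y 2) * p v (y 3))
      (fun x y => Finset.sum_nonneg fun v _ => mul_nonneg (hp _ _) (hp _ _))
      (fun x y => Finset.sum_nonneg fun v _ => mul_nonneg (hp _ _) (hp _ _))
      ?_ (fun c y => ?_) (fun d y c => ?_)
    · simpa only [← sum_pU4] using hS
    · rw [sum_fin_four]
      change (∑ u₀, ∑ u₁, ∑ u₂, ∑ u₃, if u₀ = c
        then pU4 p ![u₀, u₁, u₂, u₃] y else 0) = _
      simp [← sum_pU4]
    · rw [sum_fin_four]
      change (∑ u₀, ∑ u₁, ∑ u₂, ∑ u₃, if u₀ = c ∧ u₁ = d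
        then pU4 p ![u₀, u₁, u₂, u₃] y else 0) = _
      simp [← sum_pU4, ite_and]
  · refine condEnt_given_sum_le
      ((Equiv.prodAssoc _ _ _).trans ((Equiv.refl _).prodCongr (Equiv.prodAssoc _ _ _)))
      (a := fun v (w : (Fin 4 → ℕ) × ZMod 2 × ZMod 2) =>
        p (w.2.1 + w.2.2 + v) (w.1 0) * p v (w.1 1))
      (b := fun v (w : (Fin 4 → ℕ) × ZMod 2 × ZMod 2) => p (w.2.2 + v) (w.1 2) * p v (w.1 3))
      (fun x y => mul_nonneg (hp _ _) (hp _ _))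
      (fun x y => mul_nonneg (hp _ _) (hp _ _)) ?_ (fun c y => ?_) (fun d y c => ?_)
    · simp only [← pU4_apply]
      refine (summable_prod_of_nonneg fun w =>
        Finset.sum_nonneg fun c _ => Finset.sum_nonneg fun d _ => hU _ _).2
        ⟨fun y => Summable.of_finite, ?_⟩
      simpa only [tsum_fintype, Fintype.sum_prod_type] using hS
    · rw [sum_fin_four]
      change (∑ u₀, ∑ u₁, ∑ u₂, ∑ u₃, if u₀ = y.2.1 ∧ u₁ = y.2.2 ∧ u₂ = c
        then pU4 p ![u₀, u₁, u₂, u₃] y.1 else 0) = _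
      simp [← pU4_apply, ite_and]
    · rw [sum_fin_four]
      change (∑ u₀, ∑ u₁, ∑ u₂, ∑ u₃, if u₀ = y.2.1 ∧ u₁ = y.2.2 ∧ u₂ = c ∧ u₃ = d
        then pU4 p ![u₀, u₁, u₂, u₃] y.1 else 0) = _
      simp [← pU4_apply, ite_and]
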